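/- arXiv:2307.05906 — 2 statements merged into one kernel-verified Lean document; each statement's English description precedes it below -/
import Mathlib

section
/- Let B ≥ 1 and let X, Y be B×B real matrices with all entries in [−1, 1]. With G(X) := (1/B)·( −2·I_B + P_X + Q_X ) the gradient of L^M at X, one has ‖G(X) − G(Y)‖_F ≤ (2e²/B²)·‖X − Y‖_F, i.e., the gradient of L^M is (2e²/B²)-Lipschitz on [−1,1]^{B×B} in Frobenius norm, where e = exp(1). -/
open scoped BigOperators
open Finset Matrix

/-- Row-softmax matrix `(P_X)_{ij} = exp(X_{ij}) / Σ_k exp(X_{ik})`. -/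
noncomputable def Pmat {B : ℕ} (X : Matrix (Fin B) (Fin B) ℝ) : Matrix (Fin B) (Fin B) ℝ :=
  Matrix.of fun i j => Real.exp (X i j) / ∑ k, Real.exp (X i k)

/-- Column-softmax matrix `(Q_X)_{ij} = exp(X_{ij}) / Σ_k exp(X_{kj})`. -/
noncomputable def Qmat {B : ℕ} (X : Matrix (Fin B) (Fin B) ℝ) : Matrix (Fin B) (Fin B) ℝ :=
  Matrix.of fun i j => Real.exp (X i j) / ∑ k, Real.exp (X k j)

/-- The gradient of `L^M` at `X`: `(1/B)·(−2·I + P_X + Q_X)`. -/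
noncomputable def gradLM {B : ℕ} (X : Matrix (Fin B) (Fin B) ℝ) : Matrix (Fin B) (Fin B) ℝ :=
  (1/(B:ℝ)) • ((-2 : ℝ) • (1 : Matrix (Fin B) (Fin B) ℝ) + Pmat X + Qmat X)

/-- The Frobenius norm of a matrix. -/
noncomputable def frobNorm {m n : ℕ} (M : Matrix (Fin m) (Fin n) ℝ) : ℝ :=
  Real.sqrt (∑ i, ∑ j, (M i j)^2)

/-!
Along a segment, softmax has derivative `(diag p - p pᵀ) h`, where `p` is the current softmax
vector and `h` the direction. The entries of this vector are `p j * (h j - m)` with `m` the `p`-mean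
of `h`, so if `p ≤ K` its squared norm is at most `K` times the variance of `h` under `p`, hence at
most `K` times the second moment, hence at most `K ^ 2 * ‖h‖ ^ 2`. When the coordinates of a vector
of length `n` differ by at most `c`, its softmax is bounded by `K = exp c / n`, and this condition
is preserved along segments, so softmax is `exp c / n`-Lipschitz there. Applied to the rows of `X`
this bounds `P_X`, applied to the columns it bounds `Q_X`, and the triangle inequality adds the two.
-/

section CategoricalCov

variable {ι : Type*} [Fintype ι]

/-- The covariance operator `diag p - p pᵀ` of the categorical distribution with weights `p`,
applied to `h`. For `p = softmax x` it is the differential of `softmax` at `x`, in direction `h`. -/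
def categoricalCov (p h : ι → ℝ) : ι → ℝ := fun j => p j * (h j - p ⬝ᵥ h)

theorem sum_mul_sub_dotProduct_sq {R : Type*} [CommRing R] {p : ι → R} (hp_sum : ∑ i, p i = 1)
    (h : ι → R) :
    ∑ i, p i * (h i - p ⬝ᵥ h) ^ 2 = ∑ i, p i * h i ^ 2 - (p ⬝ᵥ h) ^ 2 := by
  have expand (i : ι) : p i * (h i - p ⬝ᵥ h) ^ 2 =
      p i * h i ^ 2 - 2 * (p ⬝ᵥ h) * (p i * h i) + p i * (p ⬝ᵥ h) ^ 2 := by ring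
  have mean : ∑ i, p i * h i = p ⬝ᵥ h := rfl
  simp only [expand, sum_add_distrib, sum_sub_distrib, ← mul_sum, ← sum_mul, hp_sum, mean]
  ring

theorem norm_categoricalCov_le {p : ι → ℝ} {K : ℝ} (hp_nonneg : ∀ i, 0 ≤ p i)
    (hp_le : ∀ i, p i ≤ K) (hp_sum : ∑ i, p i = 1) (h : ι → ℝ) :
    ‖WithLp.toLp 2 (categoricalCov p h)‖ ≤ K * ‖WithLp.toLp 2 h‖ := by
  obtain ⟨i₀, -, -⟩ := exists_ne_zero_of_sum_ne_zero (hp_sum ▸ one_ne_zero)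
  have hK : 0 ≤ K := (hp_nonneg i₀).trans (hp_le i₀)
  refine le_of_sq_le_sq ?_ (by positivity)
  rw [mul_pow, EuclideanSpace.real_norm_sq_eq, EuclideanSpace.real_norm_sq_eq]
  calc ∑ i, (p i * (h i - p ⬝ᵥ h)) ^ 2
      = ∑ i, p i * (p i * (h i - p ⬝ᵥ h) ^ 2) := sum_congr rfl fun i _ => by ring
    _ ≤ ∑ i, K * (p i * (h i - p ⬝ᵥ h) ^ 2) := by
        gcongr with i
        · exact mul_nonneg (hp_nonneg i) (sq_nonneg _)
        · exact hp_le i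
    _ = K * (∑ i, p i * h i ^ 2 - (p ⬝ᵥ h) ^ 2) := by
        rw [← mul_sum, sum_mul_sub_dotProduct_sq hp_sum]
    _ ≤ K * ∑ i, p i * h i ^ 2 := by gcongr; exact sub_le_self _ (sq_nonneg _)
    _ ≤ K * ∑ i, K * h i ^ 2 := by gcongr with i; exact hp_le i
    _ = K ^ 2 * ∑ i, h i ^ 2 := by rw [← mul_sum]; ring

end CategoricalCov

section Softmax

variable {ι : Type*} [Fintype ι]

/-- The softmax of a finite real vector, the common form of the rows of `Pmat` and the columns of
`Qmat`. -/
noncomputable def softmax (x : ι → ℝ) : ι → ℝ := fun j => Real.exp (x j) / ∑ k, Real.exp (x k)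

theorem softmax_nonneg (x : ι → ℝ) (j : ι) : 0 ≤ softmax x j := by
  unfold softmax
  positivity

variable [Nonempty ι]

theorem sum_exp_pos (x : ι → ℝ) : 0 < ∑ k, Real.exp (x k) :=
  sum_pos (fun _ _ => Real.exp_pos _) univ_nonempty

theorem sum_softmax (x : ι → ℝ) : ∑ j, softmax x j = 1 := by
  simp only [softmax, ← sum_div]
  exact div_self (sum_exp_pos x).ne'

theorem softmax_le_exp_div_card {x : ι → ℝ} {c : ℝ} {j : ι} (hx : ∀ k, x j - x k ≤ c) :
    softmax x j ≤ Real.exp c / Fintype.card ι := by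
  have hcard : (0 : ℝ) < Fintype.card ι := Nat.cast_pos.2 Fintype.card_pos
  rw [softmax, div_le_div_iff₀ (sum_exp_pos x) hcard]
  calc Real.exp (x j) * Fintype.card ι = ∑ _k : ι, Real.exp (x j) := by
        rw [sum_const, card_univ, nsmul_eq_mul, mul_comm]
    _ ≤ ∑ k, Real.exp c * Real.exp (x k) := by
        gcongr with k
        rw [← Real.exp_add, Real.exp_le_exp]
        linarith [hx k]
    _ = Real.exp c * ∑ k, Real.exp (x k) := (mul_sum ..).symm

theorem hasDerivAt_softmax_comp {x : ℝ → ι → ℝ} {x' : ι → ℝ} {t : ℝ} (hx : HasDerivAt x x' t) :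
    HasDerivAt (fun s => softmax (x s)) (categoricalCov (softmax (x t)) x') t := by
  refine hasDerivAt_pi.2 fun j => ?_
  have hexp (k : ι) : HasDerivAt (fun s => Real.exp (x s k)) (Real.exp (x t k) * x' k) t :=
    (hasDerivAt_pi.1 hx k).exp
  have hpos := sum_exp_pos (x t)
  have hmean : softmax (x t) ⬝ᵥ x' =
      (∑ k, Real.exp (x t k) * x' k) / ∑ k, Real.exp (x t k) := by
    simp only [dotProduct, softmax, div_mul_eq_mul_div, sum_div]
  refine ((hexp j).fun_div (HasDerivAt.fun_sum fun k _ => hexp k) hpos.ne').congr_deriv ?_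
  simp only [categoricalCov, hmean, softmax]
  field_simp

theorem norm_softmax_sub_softmax_le {x y : ι → ℝ} {c : ℝ} (hx : ∀ j k, x j - x k ≤ c)
    (hy : ∀ j k, y j - y k ≤ c) :
    ‖WithLp.toLp 2 (softmax x - softmax y)‖ ≤
      Real.exp c / Fintype.card ι * ‖WithLp.toLp 2 (x - y)‖ := by
  let z : ℝ → ι → ℝ := AffineMap.lineMap y x
  have hz {t : ℝ} (ht : t ∈ Set.Ico (0 : ℝ) 1) (j k : ι) : z t j - z t k ≤ c := by
    have hconvex : z t j - z t k = (1 - t) * (y j - y k) + t * (x j - x k) := by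
      simp only [z, AffineMap.lineMap_apply_module, Pi.add_apply, Pi.smul_apply, smul_eq_mul]
      ring
    have hy' := mul_le_mul_of_nonneg_left (hy j k) (sub_nonneg.2 ht.2.le)
    have hx' := mul_le_mul_of_nonneg_left (hx j k) ht.1
    linarith
  have hderiv (t : ℝ) : HasDerivAt (fun s => WithLp.toLp 2 (softmax (z s)))
      (WithLp.toLp 2 (categoricalCov (softmax (z t)) (x - y))) t := by
    have hz' : HasDerivAt z (x - y) t := AffineMap.hasDerivAt_lineMap
    exact (PiLp.hasFDerivAt_toLp (𝕜 := ℝ) 2 (softmax (z t))).comp_hasDerivAt t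
      (hasDerivAt_softmax_comp hz')
  have hbound (t : ℝ) (ht : t ∈ Set.Ico (0 : ℝ) 1) :
      ‖WithLp.toLp 2 (categoricalCov (softmax (z t)) (x - y))‖ ≤
        Real.exp c / Fintype.card ι * ‖WithLp.toLp 2 (x - y)‖ :=
    norm_categoricalCov_le (softmax_nonneg _) (fun j => softmax_le_exp_div_card (hz ht j))
      (sum_softmax _) _
  simpa [z] using norm_image_sub_le_of_norm_deriv_le_segment_01'
    (fun t _ => (hderiv t).hasDerivWithinAt) hbound

end Softmax

section Frobenius

open scoped Matrix.Norms.Frobenius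

theorem frobenius_norm_sq_eq_sum_row {m n : Type*} [Fintype m] [Fintype n] (M : Matrix m n ℝ) :
    ‖M‖ ^ 2 = ∑ i, ‖WithLp.toLp 2 (M i)‖ ^ 2 := by
  rw [frobenius_norm_def, ← Real.sqrt_eq_rpow, Real.sq_sqrt (by positivity)]
  simp [EuclideanSpace.real_norm_sq_eq]

theorem frobenius_norm_le_of_row {m n : Type*} [Fintype m] [Fintype n] {M N : Matrix m n ℝ} {C : ℝ}
    (hC : 0 ≤ C) (h : ∀ i, ‖WithLp.toLp 2 (M i)‖ ≤ C * ‖WithLp.toLp 2 (N i)‖) :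
    ‖M‖ ≤ C * ‖N‖ := by
  refine le_of_sq_le_sq ?_ (by positivity)
  rw [mul_pow, frobenius_norm_sq_eq_sum_row, frobenius_norm_sq_eq_sum_row, mul_sum]
  gcongr with i
  rw [← mul_pow]
  gcongr
  exact h i

theorem frobNorm_eq_norm {m n : ℕ} (M : Matrix (Fin m) (Fin n) ℝ) : frobNorm M = ‖M‖ := by
  simp [frobNorm, frobenius_norm_def, Real.sqrt_eq_rpow]

variable {B : ℕ} {X Y : Matrix (Fin B) (Fin B) ℝ} {c : ℝ}

theorem norm_Pmat_sub_Pmat_le (hB : 1 ≤ B) (hX : ∀ i j k, X i j - X i k ≤ c)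
    (hY : ∀ i j k, Y i j - Y i k ≤ c) : ‖Pmat X - Pmat Y‖ ≤ Real.exp c / B * ‖X - Y‖ := by
  have : Nonempty (Fin B) := ⟨⟨0, hB⟩⟩
  refine frobenius_norm_le_of_row (by positivity) fun i => ?_
  have hrow : (Pmat X - Pmat Y) i = softmax (X i) - softmax (Y i) := rfl
  have hsub : (X - Y) i = X i - Y i := rfl
  rw [hrow, hsub]
  simpa only [Fintype.card_fin] using norm_softmax_sub_softmax_le (hX i) (hY i)

theorem Qmat_eq_transpose_Pmat_transpose (X : Matrix (Fin B) (Fin B) ℝ) : Qmat X = (Pmat Xᵀ)ᵀ :=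
  rfl

theorem norm_Qmat_sub_Qmat_le (hB : 1 ≤ B) (hX : ∀ j i k, X i j - X k j ≤ c)
    (hY : ∀ j i k, Y i j - Y k j ≤ c) : ‖Qmat X - Qmat Y‖ ≤ Real.exp c / B * ‖X - Y‖ := by
  rw [Qmat_eq_transpose_Pmat_transpose, Qmat_eq_transpose_Pmat_transpose, ← transpose_sub,
    frobenius_norm_transpose, ← frobenius_norm_transpose (X - Y), transpose_sub]
  exact norm_Pmat_sub_Pmat_le hB hX hY

theorem gradLM_sub_gradLM (X Y : Matrix (Fin B) (Fin B) ℝ) :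
    gradLM X - gradLM Y = (1 / (B : ℝ)) • ((Pmat X - Pmat Y) + (Qmat X - Qmat Y)) := by
  rw [gradLM, gradLM, ← smul_sub]
  congr 1
  abel

theorem gradLM_lipschitz_general (hB : 1 ≤ B)
    (hX_row : ∀ i j k, X i j - X i k ≤ c) (hX_col : ∀ j i k, X i j - X k j ≤ c)
    (hY_row : ∀ i j k, Y i j - Y i k ≤ c) (hY_col : ∀ j i k, Y i j - Y k j ≤ c) :
    frobNorm (gradLM X - gradLM Y) ≤ 2 * Real.exp c / (B : ℝ) ^ 2 * frobNorm (X - Y) := by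
  rw [frobNorm_eq_norm, frobNorm_eq_norm, gradLM_sub_gradLM, norm_smul,
    Real.norm_of_nonneg (by positivity)]
  calc 1 / (B : ℝ) * ‖(Pmat X - Pmat Y) + (Qmat X - Qmat Y)‖
      ≤ 1 / (B : ℝ) * (‖Pmat X - Pmat Y‖ + ‖Qmat X - Qmat Y‖) := by
        gcongr
        exact norm_add_le _ _
    _ ≤ 1 / (B : ℝ) * (Real.exp c / B * ‖X - Y‖ + Real.exp c / B * ‖X - Y‖) := by
        gcongr
        · exact norm_Pmat_sub_Pmat_le hB hX_row hY_row
        · exact norm_Qmat_sub_Qmat_le hB hX_col hY_col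
    _ = 2 * Real.exp c / (B : ℝ) ^ 2 * ‖X - Y‖ := by ring

end Frobenius

/-- The gradient of `L^M` is `(2e²/B²)`-Lipschitz in Frobenius norm on the cube of
matrices with entries in `[−1,1]`. -/
theorem gradLM_lipschitz (B : ℕ) (hB : 1 ≤ B) (X Y : Matrix (Fin B) (Fin B) ℝ)
    (hX : ∀ i j, X i j ∈ Set.Icc (-1 : ℝ) 1) (hY : ∀ i j, Y i j ∈ Set.Icc (-1 : ℝ) 1) :
    frobNorm (gradLM X - gradLM Y)
      ≤ 2 * (Real.exp 1)^2 / (B:ℝ)^2 * frobNorm (X - Y) := by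
  have width {u v : ℝ} (hu : u ∈ Set.Icc (-1 : ℝ) 1) (hv : v ∈ Set.Icc (-1 : ℝ) 1) :
      u - v ≤ 2 := by linarith [hu.2, hv.1]
  rw [← Real.exp_nat_mul, Nat.cast_ofNat, mul_one]
  exact gradLM_lipschitz_general hB (fun i j k => width (hX i j) (hX i k))
    (fun j i k => width (hX i j) (hX k j)) (fun i j k => width (hY i j) (hY i k))
    (fun j i k => width (hY i j) (hY k j))
end

section
/- Let B ≥ 1, d ≥ 1 and let U, V be d×B real matrices each of whose columns has Euclidean norm at most 1. Let G = (1/B)·( −2·I_B + P_{UᵀV} + Q_{UᵀV} ) be the gradient of L^M at the matrix UᵀV. Then the gradient of the mini-batch contrastive loss (U,V) ↦ L^M(UᵀV), given by the pair ( V·Gᵀ, U·G ), satisfies √( ‖V·Gᵀ‖_F² + ‖U·G‖_F² ) ≤ 4. -/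
open scoped BigOperators
open Finset Matrix

/-! The gradient is `G = (1/B) • ((P - 1) + (Q - 1))`, where `P` is row-stochastic and `Q` is
column-stochastic. A row of `P` has `ℓ²` norm at most its `ℓ¹` norm `1`, so
`‖P - 1‖_F² ≤ 2B`, and the same holds for `Q` by transposition; hence `‖G‖_F² ≤ 8/B`. Since
`‖U‖_F²` and `‖V‖_F²` are at most `B`, submultiplicativity of the Frobenius norm bounds the squared
norm of `(V * Gᵀ, U * G)` by `2 * B * (8/B) = 16`. -/

section FrobeniusNorm

open scoped Matrix.Norms.Frobenius

variable {m n : Type*} [Fintype m] [Fintype n]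

theorem frobenius_norm_sq_eq_sum_sq (A : Matrix m n ℝ) : ‖A‖ ^ 2 = ∑ i, ∑ j, A i j ^ 2 := by
  rw [frobenius_norm_def, ← Real.sqrt_eq_rpow, Real.sq_sqrt (by positivity)]
  simp only [Real.rpow_two, Real.norm_eq_abs, sq_abs]

theorem frobNorm_eq_frobenius_norm {k l : ℕ} (A : Matrix (Fin k) (Fin l) ℝ) :
    frobNorm A = ‖A‖ := by
  rw [frobNorm, ← frobenius_norm_sq_eq_sum_sq, Real.sqrt_sq (norm_nonneg A)]

theorem frobNorm_mul_sq_le {k l p : ℕ} (A : Matrix (Fin k) (Fin l) ℝ)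
    (C : Matrix (Fin l) (Fin p) ℝ) :
    frobNorm (A * C) ^ 2 ≤ frobNorm A ^ 2 * frobNorm C ^ 2 := by
  simp only [frobNorm_eq_frobenius_norm, ← mul_pow]
  gcongr
  exact frobenius_norm_mul A C

theorem frobenius_norm_sq_le_of_forall_col_le {A : Matrix m n ℝ} {c : ℝ}
    (hA : ∀ j, √(∑ i, A i j ^ 2) ≤ c) : ‖A‖ ^ 2 ≤ Fintype.card n * c ^ 2 := by
  have col_sq_le (j : n) : ∑ i, A i j ^ 2 ≤ c ^ 2 :=
    (Real.sqrt_le_iff.1 (hA j)).2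
  calc ‖A‖ ^ 2 = ∑ j, ∑ i, A i j ^ 2 := by rw [frobenius_norm_sq_eq_sum_sq, sum_comm]
    _ ≤ ∑ _j : n, c ^ 2 := sum_le_sum fun j _ => col_sq_le j
    _ = Fintype.card n * c ^ 2 := by rw [sum_const, card_univ, nsmul_eq_mul]

theorem frobNorm_sq_le_of_forall_col_le_one {k l : ℕ} {A : Matrix (Fin k) (Fin l) ℝ}
    (hA : ∀ j, √(∑ i, A i j ^ 2) ≤ 1) : frobNorm A ^ 2 ≤ l := by
  simpa [frobNorm_eq_frobenius_norm] using frobenius_norm_sq_le_of_forall_col_le hA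

variable [DecidableEq n]

theorem sum_sq_sub_one_row_le_two {P : Matrix n n ℝ} (hP : P ∈ rowStochastic ℝ n) (i : n) :
    ∑ j, (P - 1) i j ^ 2 ≤ 2 := by
  have row_sq_le : ∑ j, P i j ^ 2 ≤ 1 := by
    simpa only [sum_row_of_mem_rowStochastic hP i, one_pow] using
      sum_sq_le_sq_sum_of_nonneg (s := univ) (f := P i) fun j _ => nonneg_of_mem_rowStochastic hP
  calc ∑ j, (P - 1) i j ^ 2
      = ∑ j, (P i j ^ 2 - 2 * (P i j * (1 : Matrix n n ℝ) i j) + (1 : Matrix n n ℝ) i j ^ 2) :=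
        sum_congr rfl fun j _ => by rw [Matrix.sub_apply]; ring
    _ = ∑ j, P i j ^ 2 - 2 * P i i + 1 := by
        simp [sum_add_distrib, sum_sub_distrib, one_apply]
    _ ≤ 2 := by linarith [nonneg_of_mem_rowStochastic (i := i) (j := i) hP]

theorem frobenius_norm_sub_one_le_of_mem_rowStochastic {P : Matrix n n ℝ}
    (hP : P ∈ rowStochastic ℝ n) : ‖P - 1‖ ≤ √(2 * Fintype.card n) := by
  refine Real.le_sqrt_of_sq_le ?_
  calc ‖P - 1‖ ^ 2 = ∑ i, ∑ j, (P - 1) i j ^ 2 := frobenius_norm_sq_eq_sum_sq _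
    _ ≤ ∑ _i : n, 2 := sum_le_sum fun i _ => sum_sq_sub_one_row_le_two hP i
    _ = 2 * Fintype.card n := by rw [sum_const, card_univ, nsmul_eq_mul, mul_comm]

theorem frobenius_norm_sub_one_le_of_mem_colStochastic {Q : Matrix n n ℝ}
    (hQ : Q ∈ colStochastic ℝ n) : ‖Q - 1‖ ≤ √(2 * Fintype.card n) := by
  rw [← frobenius_norm_transpose, transpose_sub, transpose_one]
  exact frobenius_norm_sub_one_le_of_mem_rowStochastic
    (transpose_mem_rowStochastic_iff_mem_colStochastic.2 hQ)

end FrobeniusNorm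

section Softmax

variable {B : ℕ} (X : Matrix (Fin B) (Fin B) ℝ)

theorem Pmat_mem_rowStochastic : Pmat X ∈ rowStochastic ℝ (Fin B) := by
  refine mem_rowStochastic_iff_sum.2 ⟨fun i j => ?_, fun i => ?_⟩
  · rw [Pmat, of_apply]
    positivity
  · have sum_exp_pos : 0 < ∑ k, Real.exp (X i k) :=
      sum_pos (fun k _ => Real.exp_pos _) ⟨i, mem_univ i⟩
    simp only [Pmat, of_apply]
    rw [← sum_div, div_self sum_exp_pos.ne']

theorem Qmat_mem_colStochastic : Qmat X ∈ colStochastic ℝ (Fin B) :=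
  transpose_mem_rowStochastic_iff_mem_colStochastic.1 (Pmat_mem_rowStochastic Xᵀ)

theorem gradLM_eq_smul_sub_one_add_sub_one :
    gradLM X = (1 / (B : ℝ)) • ((Pmat X - 1) + (Qmat X - 1)) := by
  rw [gradLM]
  module

open scoped Matrix.Norms.Frobenius in
theorem frobenius_norm_gradLM_sq_le : ‖gradLM X‖ ^ 2 ≤ 8 / B := by
  have hP : ‖Pmat X - 1‖ ≤ √(2 * B) := by
    simpa using frobenius_norm_sub_one_le_of_mem_rowStochastic (Pmat_mem_rowStochastic X)
  have hQ : ‖Qmat X - 1‖ ≤ √(2 * B) := by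
    simpa using frobenius_norm_sub_one_le_of_mem_colStochastic (Qmat_mem_colStochastic X)
  calc ‖gradLM X‖ ^ 2
      = (1 / B) ^ 2 * ‖(Pmat X - 1) + (Qmat X - 1)‖ ^ 2 := by
        rw [gradLM_eq_smul_sub_one_add_sub_one, norm_smul, mul_pow, Real.norm_eq_abs, sq_abs]
    _ ≤ (1 / B) ^ 2 * (√(2 * B) + √(2 * B)) ^ 2 := by gcongr; exact norm_add_le_of_le hP hQ
    _ = (1 / B) ^ 2 * (8 * B) := by rw [← two_mul, mul_pow, Real.sq_sqrt (by positivity)]; ring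
    _ = 8 / B := by field_simp

end Softmax

theorem miniBatch_grad_norm_le_four_general {B d e : ℕ} (hB : 1 ≤ B)
    (X : Matrix (Fin B) (Fin B) ℝ) (U : Matrix (Fin d) (Fin B) ℝ) (V : Matrix (Fin e) (Fin B) ℝ)
    (hUV : frobNorm V ^ 2 + frobNorm U ^ 2 ≤ 2 * B) :
    √(frobNorm (V * (gradLM X)ᵀ) ^ 2 + frobNorm (U * gradLM X) ^ 2) ≤ 4 := by
  have hB_ne : (B : ℝ) ≠ 0 := Nat.cast_ne_zero.2 (Nat.one_le_iff_ne_zero.1 hB)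
  have hG : frobNorm (gradLM X) ^ 2 ≤ 8 / B := by
    simpa only [frobNorm_eq_frobenius_norm] using frobenius_norm_gradLM_sq_le X
  have hGt : frobNorm (gradLM X)ᵀ = frobNorm (gradLM X) := by
    simp only [frobNorm_eq_frobenius_norm, frobenius_norm_transpose]
  refine Real.sqrt_le_iff.2 ⟨by norm_num, ?_⟩
  calc frobNorm (V * (gradLM X)ᵀ) ^ 2 + frobNorm (U * gradLM X) ^ 2
      ≤ frobNorm V ^ 2 * frobNorm (gradLM X)ᵀ ^ 2 + frobNorm U ^ 2 * frobNorm (gradLM X) ^ 2 :=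
        add_le_add (frobNorm_mul_sq_le _ _) (frobNorm_mul_sq_le _ _)
    _ = (frobNorm V ^ 2 + frobNorm U ^ 2) * frobNorm (gradLM X) ^ 2 := by rw [hGt, add_mul]
    _ ≤ 2 * B * (8 / B) := by gcongr
    _ = 4 ^ 2 := by rw [mul_assoc, mul_div_cancel₀ _ hB_ne]; norm_num

/-- The gradient of the mini-batch contrastive loss `(U,V) ↦ L^M(UᵀV)`, namely
`(V·Gᵀ, U·G)` with `G = ∇L^M(UᵀV)`, has norm at most 4 when all columns of `U` and
`V` lie in the closed unit ball. -/
theorem miniBatch_grad_norm_le_four (B d : ℕ) (hB : 1 ≤ B) (hd : 1 ≤ d)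
    (U V : Matrix (Fin d) (Fin B) ℝ)
    (hU : ∀ j, Real.sqrt (∑ i, (U i j)^2) ≤ 1)
    (hV : ∀ j, Real.sqrt (∑ i, (V i j)^2) ≤ 1) :
    Real.sqrt (frobNorm (V * (gradLM (Uᵀ * V))ᵀ)^2 + frobNorm (U * gradLM (Uᵀ * V))^2)
      ≤ 4 := by
  refine miniBatch_grad_norm_le_four_general hB (Uᵀ * V) U V ?_
  linarith [frobNorm_sq_le_of_forall_col_le_one hU, frobNorm_sq_le_of_forall_col_le_one hV]
end
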